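/- (Thermodynamic limit of the pressure on the continuum) Let g : ℝ → ℝ be an even Schwartz function whose Fourier transform λ^∞(s) := ∫_{−∞}^∞ g(t) e^{2πist} dt satisfies λ^∞(s) ≥ 0 for all s, and let z > 0. For L > 0 and p ∈ ℤ set λ_p^{(L)} := L ∫_{−1/2}^{1/2} g( (L/π) sin(πt) ) e^{2πipt} dt, and assume 1 + z λ_p^{(L)} > 0 for all L > 0 and p ∈ ℤ. Then lim_{L→∞} (1/L) Σ_{p∈ℤ} log(1 + z λ_p^{(L)}) = ∫_{−∞}^∞ log(1 + z λ^∞(s)) ds. -/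

import Mathlib

open MeasureTheory Filter Topology
open scoped FourierTransform

/-!
Cut into cells of length `1 / L`, the normalised sum is the integral of the step function
`s ↦ log (1 + z λ_{⌊L s⌋})`, so dominated convergence proves the limit once the eigenvalues are
uniformly close to `λ^∞ (p / L)` and uniformly of size `O((1 + (p / L)²)⁻¹)`. In the arc length
`u = L t`, the eigenvalue `λ_p` is the Fourier integral at `p / L` of `g (chord u)` cut off to one
period; this profile converges to `g` in `L¹`, which gives the uniform closeness. Integrating by
parts twice on the circle gives the decay. Finally, `1 + z λ^∞` is continuous, positive and tends
to `1` at infinity, so it is bounded below by a positive constant, and for large `L` the logarithm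
is only evaluated where it is Lipschitz.
-/

section RiemannSum

variable {E : Type*} [NormedAddCommGroup E] [NormedSpace ℝ E] [CompleteSpace E]

lemma abs_floor_mul_div_sub_le {L : ℝ} (hL : 0 < L) (s : ℝ) : |⌊L * s⌋ / L - s| ≤ 1 / L := by
  rw [div_sub' hL.ne', abs_div, abs_of_pos hL]
  gcongr
  rw [abs_le]
  constructor <;> linarith [Int.floor_le (L * s), Int.lt_floor_add_one (L * s)]

lemma tendsto_floor_mul_div (s : ℝ) :
    Tendsto (fun L : ℝ => (⌊L * s⌋ : ℝ) / L) atTop (𝓝 s) := by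
  rw [tendsto_iff_norm_sub_tendsto_zero]
  refine squeeze_zero' (Eventually.of_forall fun _ => norm_nonneg _) ?_
    (tendsto_id.const_div_atTop (1 : ℝ))
  filter_upwards [eventually_gt_atTop (0 : ℝ)] with L hL using abs_floor_mul_div_sub_le hL s

lemma integral_comp_floor {a : ℤ → E} (ha : Integrable fun x : ℝ => a ⌊x⌋) :
    ∫ x : ℝ, a ⌊x⌋ = ∑' p, a p := by
  rw [← ha.hasSum_intervalIntegral_comp_add_int.tsum_eq]
  refine tsum_congr fun p => ?_
  have hp : ∫ x in (0 : ℝ)..1, a ⌊x + p⌋ = ∫ _ in (0 : ℝ)..1, a p :=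
    intervalIntegral.integral_congr_Ioo_of_le zero_le_one fun _ hx => by
      simp only [Int.floor_add_intCast, Int.floor_eq_zero_iff.2 ⟨hx.1.le, hx.2⟩, zero_add]
  simpa using hp

lemma inv_one_add_sq_le_of_abs_sub_le_one {q s : ℝ} (h : |q - s| ≤ 1) :
    (1 + q ^ 2)⁻¹ ≤ 3 * (1 + s ^ 2)⁻¹ := by
  rw [← div_eq_mul_inv, inv_le_comm₀ (by positivity) (by positivity), inv_div,
    div_le_iff₀ (by norm_num)]
  nlinarith [abs_le.1 h, sq_nonneg (2 * q - s)]

theorem tendsto_riemannSum_integral {F : ℝ → ℝ → E} {f : ℝ → E} {C : ℝ}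
    (hF : ∀ᶠ L in atTop, ∀ p : ℤ, ‖F L (p / L)‖ ≤ C * (1 + (p / L) ^ 2)⁻¹)
    (hlim : ∀ s, Tendsto (fun L => F L (⌊L * s⌋ / L)) atTop (𝓝 (f s))) :
    Tendsto (fun L : ℝ => (1 / L) • ∑' p : ℤ, F L (p / L)) atTop (𝓝 (∫ s, f s)) := by
  have hC : 0 ≤ C := by
    obtain ⟨L, hL⟩ := hF.exists
    simpa using (norm_nonneg _).trans (hL 0)
  have hmeas : ∀ L, AEStronglyMeasurable (fun s : ℝ => F L (⌊L * s⌋ / L)) := fun L =>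
    ((StronglyMeasurable.of_discrete (f := fun p : ℤ => F L (p / L))).comp_measurable
      (Int.measurable_floor.comp (measurable_const_mul L))).aestronglyMeasurable
  have hint : Integrable fun s : ℝ => C * (3 * (1 + s ^ 2)⁻¹) :=
    (integrable_inv_one_add_sq.const_mul 3).const_mul C
  have hbound : ∀ᶠ L : ℝ in atTop, ∀ s : ℝ, ‖F L (⌊L * s⌋ / L)‖ ≤ C * (3 * (1 + s ^ 2)⁻¹) := by
    filter_upwards [hF, eventually_ge_atTop (1 : ℝ)] with L hL hL1 s
    have hq : |⌊L * s⌋ / L - s| ≤ 1 :=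
      (abs_floor_mul_div_sub_le (by linarith) s).trans (div_le_one_of_le₀ hL1 (by linarith))
    exact (hL _).trans (by gcongr; exact inv_one_add_sq_le_of_abs_sub_le_one hq)
  refine (tendsto_integral_filter_of_dominated_convergence _ (Eventually.of_forall hmeas)
    (hbound.mono fun L hL => Eventually.of_forall hL) hint (Eventually.of_forall hlim)).congr' ?_
  filter_upwards [hbound, eventually_gt_atTop (0 : ℝ)] with L hL hL0
  have hi : Integrable fun s : ℝ => F L (⌊L * s⌋ / L) :=
    hint.mono' (hmeas L) (Eventually.of_forall hL)
  rw [Measure.integral_comp_mul_left (fun x : ℝ => F L (⌊x⌋ / L)) L, abs_of_pos (inv_pos.2 hL0),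
    integral_comp_floor (a := fun p : ℤ => F L (p / L))
      ((integrable_comp_mul_left_iff (fun x : ℝ => F L (⌊x⌋ / L)) hL0.ne').1 hi), one_div]

end RiemannSum

section Log

lemma abs_log_one_add_le {δ x : ℝ} (hδ : 0 < δ) (hδ1 : δ ≤ 1) (hx : δ ≤ 1 + x) :
    |Real.log (1 + x)| ≤ |x| / δ := by
  have hpos : 0 < 1 + x := hδ.trans_le hx
  rw [abs_le]
  constructor
  · calc -(|x| / δ) ≤ -(|x| / (1 + x)) := by gcongr
      _ ≤ x / (1 + x) := by rw [← neg_div]; gcongr; exact neg_abs_le x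
      _ = 1 - (1 + x)⁻¹ := by field_simp; ring
      _ ≤ Real.log (1 + x) := Real.one_sub_inv_le_log_of_pos hpos
  · calc Real.log (1 + x) ≤ x := by linarith [Real.log_le_sub_one_of_pos hpos]
      _ ≤ |x| := le_abs_self x
      _ ≤ |x| / δ := le_div_self (abs_nonneg x) hδ hδ1

lemma exists_pos_forall_le_of_tendsto_cocompact {X : Type*} [TopologicalSpace X] {f : X → ℝ}
    {c : ℝ} (hf : Continuous f) (hpos : ∀ x, 0 < f x) (hc : 0 < c)
    (hlim : Tendsto f (cocompact X) (𝓝 c)) : ∃ δ > 0, ∀ x, δ ≤ f x := by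
  by_cases h : ∃ x₀, f x₀ < c
  · obtain ⟨x₀, hx₀⟩ := h
    obtain ⟨x, hx⟩ := hf.exists_forall_le' x₀
      ((hlim.eventually_const_lt hx₀).mono fun _ => le_of_lt)
    exact ⟨f x, hpos x, hx⟩
  · push Not at h
    exact ⟨c, hc, h⟩

theorem tendsto_riemannSum_log_one_add {Λ : ℝ → ℝ → ℝ} {m : ℝ → ℝ} {C : ℝ} (hm : Continuous m)
    (hm_zero : Tendsto m (cocompact ℝ) (𝓝 0)) (hm_pos : ∀ s, 0 < 1 + m s)
    (hΛ : TendstoUniformly Λ m atTop)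
    (hbound : ∀ᶠ L in atTop, ∀ p : ℤ, |Λ L (p / L)| ≤ C * (1 + (p / L) ^ 2)⁻¹) :
    Tendsto (fun L : ℝ => (1 / L) * ∑' p : ℤ, Real.log (1 + Λ L (p / L))) atTop
      (𝓝 (∫ s, Real.log (1 + m s))) := by
  have hm_one : Tendsto (fun s => 1 + m s) (cocompact ℝ) (𝓝 1) := by
    simpa only [add_zero] using hm_zero.const_add 1
  obtain ⟨δ, hδ, hle⟩ :=
    exists_pos_forall_le_of_tendsto_cocompact (hm.const_add 1) hm_pos one_pos hm_one
  have hδ1 : δ ≤ 1 := ge_of_tendsto' hm_one hle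
  have hlower : ∀ᶠ L in atTop, ∀ s, δ / 2 ≤ 1 + Λ L s := by
    filter_upwards [Metric.tendstoUniformly_iff.1 hΛ (δ / 2) (half_pos hδ)] with L hL s
    have := (abs_lt.1 (hL s)).2
    linarith [hle s]
  refine tendsto_riemannSum_integral (F := fun L s => Real.log (1 + Λ L s)) (C := C / (δ / 2)) ?_
    fun s => ?_
  · filter_upwards [hlower, hbound] with L hL hLC p
    calc |Real.log (1 + Λ L (p / L))| ≤ |Λ L (p / L)| / (δ / 2) :=
          abs_log_one_add_le (half_pos hδ) (by linarith) (hL _)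
      _ ≤ C * (1 + (p / L) ^ 2)⁻¹ / (δ / 2) := by gcongr; exact hLC p
      _ = C / (δ / 2) * (1 + (p / L) ^ 2)⁻¹ := by ring
  · exact ((hΛ.tendsto_comp hm.continuousAt (tendsto_floor_mul_div s)).const_add 1).log
      (hm_pos s).ne'

end Log

section Fourier

variable {V E : Type*} [NormedAddCommGroup V] [InnerProductSpace ℝ V] [FiniteDimensional ℝ V]
  [MeasurableSpace V] [BorelSpace V] [NormedAddCommGroup E] [NormedSpace ℂ E]

lemma norm_fourierInv_sub_le {f g : V → E} (hf : Integrable f) (hg : Integrable g) (w : V) :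
    ‖𝓕⁻ f w - 𝓕⁻ g w‖ ≤ ∫ v, ‖f v - g v‖ := by
  simp_rw [Real.fourierInv_eq_fourier_neg, Real.fourier_eq]
  rw [← integral_sub ((Real.fourierIntegral_convergent_iff _).2 hf)
    ((Real.fourierIntegral_convergent_iff _).2 hg)]
  simp_rw [← smul_sub]
  exact (norm_integral_le_integral_norm _).trans_eq (by simp_rw [Circle.norm_smul])

theorem tendstoUniformly_fourierInv_of_dominated {ι : Type*} {l : Filter ι}
    [l.IsCountablyGenerated] {F : ι → V → E} {f : V → E} {bound : V → ℝ}
    (hF_meas : ∀ᶠ i in l, AEStronglyMeasurable (F i)) (hf : Integrable f)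
    (hbound : Integrable bound) (hF_le : ∀ᶠ i in l, ∀ᵐ v, ‖F i v‖ ≤ bound v)
    (hlim : ∀ᵐ v, Tendsto (fun i => F i v) l (𝓝 (f v))) :
    TendstoUniformly (fun i => 𝓕⁻ (F i)) (𝓕⁻ f) l := by
  have hL1 : Tendsto (fun i => ∫ v, ‖F i v - f v‖) l (𝓝 0) := by
    rw [← integral_zero V ℝ]
    refine tendsto_integral_filter_of_dominated_convergence (fun v => bound v + ‖f v‖) ?_ ?_
      (hbound.add hf.norm) ?_
    · filter_upwards [hF_meas] with i hi using (hi.sub hf.1).norm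
    · filter_upwards [hF_le] with i hi
      filter_upwards [hi] with v hv
      rw [norm_norm]
      exact (norm_sub_le _ _).trans (by gcongr)
    · filter_upwards [hlim] with v hv using tendsto_iff_norm_sub_tendsto_zero.1 hv
  rw [Metric.tendstoUniformly_iff]
  intro ε hε
  filter_upwards [hF_meas, hF_le, hL1.eventually_lt_const hε] with i hi hle hlt w
  rw [dist_comm, dist_eq_norm]
  exact (norm_fourierInv_sub_le (hbound.mono' hi hle) hf w).trans_lt hlt

lemma fourierInv_eq_integral_mul_cexp (f : ℝ → ℂ) (s : ℝ) :
    𝓕⁻ f s = ∫ u, f u * Complex.exp (2 * Real.pi * Complex.I * s * u) := by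
  rw [Real.fourierInv_eq']
  congr with u
  rw [smul_eq_mul, mul_comm]
  congr 2
  simp only [RCLike.inner_apply, Real.ringHom_apply, Complex.ofReal_mul, Complex.ofReal_ofNat]
  ring

lemma continuous_fourierInv_of_integrable {f : V → E} (hf : Integrable f) : Continuous (𝓕⁻ f) := by
  simp_rw [funext (Real.fourierInv_eq_fourier_neg f)]
  exact (VectorFourier.fourierIntegral_continuous Real.continuous_fourierChar
    (innerSL ℝ).continuous₂ hf).comp continuous_neg

lemma tendsto_fourierInv_cocompact (f : V → E) : Tendsto (𝓕⁻ f) (cocompact V) (𝓝 0) := by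
  simp_rw [funext (Real.fourierInv_eq_fourier_neg f)]
  exact (tendsto_integral_exp_inner_smul_cocompact f).comp
    (Homeomorph.neg V).isClosedEmbedding.tendsto_cocompact

end Fourier

section Oscillatory

lemma norm_cexp_two_pi_I_mul (s u : ℝ) :
    ‖Complex.exp (2 * Real.pi * Complex.I * s * u)‖ = 1 := by
  rw [← Complex.norm_exp_ofReal_mul_I (2 * Real.pi * s * u)]
  congr 2
  push_cast
  ring

lemma norm_integral_mul_cexp_le {f : ℝ → ℂ} {a b C : ℝ} (hab : a ≤ b)
    (hf : ∀ u ∈ Set.Icc a b, ‖f u‖ ≤ C * (1 + u ^ 2)⁻¹) (s : ℝ) :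
    ‖∫ u in a..b, f u * Complex.exp (2 * Real.pi * Complex.I * s * u)‖ ≤ C * Real.pi := by
  have hC : 0 ≤ C := nonneg_of_mul_nonneg_left
    ((norm_nonneg _).trans (hf a (Set.left_mem_Icc.2 hab))) (by positivity)
  calc ‖∫ u in a..b, f u * Complex.exp (2 * Real.pi * Complex.I * s * u)‖
      ≤ ∫ u in a..b, C * (1 + u ^ 2)⁻¹ := by
        refine intervalIntegral.norm_integral_le_of_norm_le hab
          (Eventually.of_forall fun u hu => ?_)
          (intervalIntegral.intervalIntegrable_inv_one_add_sq.const_mul C)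
        rw [norm_mul, norm_cexp_two_pi_I_mul, mul_one]
        exact hf u (Set.Ioc_subset_Icc_self hu)
    _ = C * (Real.arctan b - Real.arctan a) := by
        rw [intervalIntegral.integral_const_mul, integral_inv_one_add_sq]
    _ ≤ C * Real.pi := by
        gcongr
        linarith [Real.arctan_lt_pi_div_two b, Real.neg_pi_div_two_lt_arctan a]

lemma integral_deriv_mul_cexp {f f' : ℝ → ℂ} {a b : ℝ} {c : ℂ}
    (hf : ∀ u, HasDerivAt f (f' u) u) (hf' : IntervalIntegrable f' volume a b)
    (hab : f a * Complex.exp (c * a) = f b * Complex.exp (c * b)) :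
    ∫ u in a..b, f' u * Complex.exp (c * u) = -c * ∫ u in a..b, f u * Complex.exp (c * u) := by
  have hexp (u : ℝ) :
      HasDerivAt (fun u : ℝ => Complex.exp (c * u)) (Complex.exp (c * u) * c) u := by
    simpa using ((Complex.ofRealCLM.hasDerivAt (x := u)).const_mul c).cexp
  have hparts := intervalIntegral.integral_mul_deriv_eq_deriv_mul (fun u _ => hf u)
    (fun u _ => hexp u) hf' (Continuous.intervalIntegrable (by fun_prop) a b)
  rw [hab, sub_self, zero_sub] at hparts
  rw [← neg_eq_iff_eq_neg.2 hparts, ← intervalIntegral.integral_const_mul,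
    ← intervalIntegral.integral_neg]
  congr with u
  ring

/-- Two integrations by parts trade decay of `f''` in `u` for decay of the integral in `s`. -/
theorem norm_integral_mul_cexp_le_inv_one_add_sq {f f' f'' : ℝ → ℂ} {a b s A B : ℝ} (hab : a ≤ b)
    (hf : ∀ u, HasDerivAt f (f' u) u) (hf' : ∀ u, HasDerivAt f' (f'' u) u)
    (hf'' : IntervalIntegrable f'' volume a b)
    (hper : f a = f b) (hper' : f' a = f' b)
    (hexp : Complex.exp (2 * Real.pi * Complex.I * s * a) =
      Complex.exp (2 * Real.pi * Complex.I * s * b))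
    (hA : ∀ u ∈ Set.Icc a b, ‖f u‖ ≤ A * (1 + u ^ 2)⁻¹)
    (hB : ∀ u ∈ Set.Icc a b, ‖f'' u‖ ≤ B * (1 + u ^ 2)⁻¹) :
    ‖∫ u in a..b, f u * Complex.exp (2 * Real.pi * Complex.I * s * u)‖ ≤
      (A + B) * Real.pi * (1 + s ^ 2)⁻¹ := by
  set J := ∫ u in a..b, f u * Complex.exp (2 * Real.pi * Complex.I * s * u) with hJ
  have hparts : ∫ u in a..b, f'' u * Complex.exp (2 * Real.pi * Complex.I * s * u) =
      (2 * Real.pi * Complex.I * s) ^ 2 * J := by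
    have hf'_int : IntervalIntegrable f' volume a b :=
      (continuous_iff_continuousAt.2 fun u => (hf' u).continuousAt).intervalIntegrable a b
    rw [integral_deriv_mul_cexp hf' hf'' (by rw [hper', hexp]),
      integral_deriv_mul_cexp hf hf'_int (by rw [hper, hexp]), ← hJ]
    ring
  have hnorm : ‖(2 * Real.pi * Complex.I * s : ℂ) ^ 2‖ = (2 * Real.pi) ^ 2 * s ^ 2 := by
    simp [abs_of_pos Real.pi_pos, mul_pow]
  have hJB : (2 * Real.pi) ^ 2 * s ^ 2 * ‖J‖ ≤ B * Real.pi := by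
    rw [← hnorm, ← norm_mul, ← hparts]
    exact norm_integral_mul_cexp_le hab hB s
  rw [← div_eq_mul_inv, le_div_iff₀ (by positivity)]
  calc ‖J‖ * (1 + s ^ 2) = ‖J‖ + 1 * s ^ 2 * ‖J‖ := by ring
    _ ≤ ‖J‖ + (2 * Real.pi) ^ 2 * s ^ 2 * ‖J‖ := by gcongr; nlinarith [Real.pi_gt_three]
    _ ≤ A * Real.pi + B * Real.pi := add_le_add (norm_integral_mul_cexp_le hab hA s) hJB
    _ = (A + B) * Real.pi := by ring

end Oscillatory

section Chord

/-- The signed length of the chord joining two points at arc length `u` on the circle of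
circumference `L`. -/
noncomputable def chord (L u : ℝ) : ℝ :=
  L / Real.pi * Real.sin (Real.pi * (u / L))

lemma continuous_chord (L : ℝ) : Continuous (chord L) := by
  unfold chord
  fun_prop

lemma chord_neg (L u : ℝ) : chord L (-u) = -chord L u := by
  simp [chord, neg_div]

lemma hasDerivAt_chord {L : ℝ} (hL : L ≠ 0) (u : ℝ) :
    HasDerivAt (chord L) (Real.cos (Real.pi * (u / L))) u :=
  ((((hasDerivAt_id u).div_const L).const_mul Real.pi).sin.const_mul (L / Real.pi)).congr_deriv
    (by field_simp; simp only [id_eq])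

lemma hasDerivAt_cos_pi_mul_div (L u : ℝ) :
    HasDerivAt (fun u => Real.cos (Real.pi * (u / L))) (-((Real.pi / L) ^ 2 * chord L u)) u :=
  (((hasDerivAt_id u).div_const L).const_mul Real.pi).cos.congr_deriv
    (by unfold chord; simp only [id_eq, one_div, neg_mul, neg_inj]; field_simp)

lemma abs_chord_le {L : ℝ} (hL : 0 ≤ L) (u : ℝ) : |chord L u| ≤ L / Real.pi := by
  rw [chord, abs_mul, abs_of_nonneg (by positivity)]
  exact mul_le_of_le_one_right (by positivity) (Real.abs_sin_le_one _)

/-- Jordan's inequality `|sin y| ≥ (2/π)|y|`. -/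
lemma abs_le_two_mul_abs_chord {L u : ℝ} (hL : 0 < L) (hu : |u| ≤ L / 2) :
    |u| ≤ 2 * |chord L u| := by
  have hangle : |Real.pi * (u / L)| = Real.pi * (|u| / L) := by
    rw [abs_mul, abs_div, abs_of_pos Real.pi_pos, abs_of_pos hL]
  have hsin : 2 / Real.pi * (Real.pi * (|u| / L)) ≤ |Real.sin (Real.pi * (u / L))| := by
    rw [← hangle]
    apply Real.mul_abs_le_abs_sin
    rw [hangle, div_eq_mul_inv Real.pi]
    gcongr
    rw [div_le_iff₀ hL]
    linarith
  calc |u| = Real.pi / 4 * |u| * (4 / Real.pi) := by field_simp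
    _ ≤ 1 * |u| * (4 / Real.pi) := by gcongr; linarith [Real.pi_le_four]
    _ = 2 * (L / Real.pi * (2 / Real.pi * (Real.pi * (|u| / L)))) := by field_simp; ring
    _ ≤ 2 * (L / Real.pi * |Real.sin (Real.pi * (u / L))|) := by gcongr
    _ = 2 * |chord L u| := by rw [chord, abs_mul, abs_of_pos (div_pos hL Real.pi_pos)]

lemma inv_one_add_chord_sq_le {L u : ℝ} (hL : 0 < L) (hu : |u| ≤ L / 2) :
    (1 + chord L u ^ 2)⁻¹ ≤ 4 * (1 + u ^ 2)⁻¹ := by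
  have hsq : u ^ 2 ≤ (2 * chord L u) ^ 2 :=
    sq_le_sq.2 (by simpa [abs_mul] using abs_le_two_mul_abs_chord hL hu)
  rw [← div_eq_mul_inv, inv_le_comm₀ (by positivity) (by positivity), inv_div,
    div_le_iff₀ (by norm_num)]
  linarith

lemma tendsto_chord (u : ℝ) : Tendsto (fun L => chord L u) atTop (𝓝 u) := by
  have hangle : Tendsto (fun L : ℝ => Real.pi * (u / L)) atTop (𝓝 0) := by
    simpa using (tendsto_id.const_div_atTop u).const_mul Real.pi
  have hsinc : Tendsto (fun L : ℝ => u * Real.sinc (Real.pi * (u / L))) atTop (𝓝 u) := by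
    simpa using ((Real.continuous_sinc.tendsto 0).comp hangle).const_mul u
  refine hsinc.congr' ?_
  filter_upwards [eventually_gt_atTop (0 : ℝ)] with L hL
  rcases eq_or_ne u 0 with rfl | hu
  · simp [chord]
  · rw [Real.sinc_of_ne_zero (by positivity), chord]
    field_simp

end Chord

section IteratedDeriv

lemma hasDerivAt_iteratedDeriv {𝕜 F : Type*} [NontriviallyNormedField 𝕜] [NormedAddCommGroup F]
    [NormedSpace 𝕜 F] {f : 𝕜 → F} {n : WithTop ℕ∞} {k : ℕ} (hf : ContDiff 𝕜 n f) (hk : k < n)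
    (x : 𝕜) : HasDerivAt (iteratedDeriv k f) (iteratedDeriv (k + 1) f x) x := by
  rw [iteratedDeriv_succ]
  exact (hf.differentiable_iteratedDeriv k hk x).hasDerivAt

lemma exists_norm_iteratedDeriv_le_inv_one_add_sq {F : Type*} [NormedAddCommGroup F]
    [NormedSpace ℝ F] (f : SchwartzMap ℝ F) (n : ℕ) :
    ∃ C, ∀ k ≤ n, ∀ x, ‖iteratedDeriv k f x‖ ≤ C * (1 + x ^ 2)⁻¹ := by
  refine ⟨2 ^ 2 * (Finset.Iic (2, n)).sup (fun m => SchwartzMap.seminorm ℝ m.1 m.2) f,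
    fun k hk x => ?_⟩
  rw [← div_eq_mul_inv, le_div_iff₀' (by positivity), ← norm_iteratedFDeriv_eq_norm_iteratedDeriv]
  refine le_trans ?_
    (SchwartzMap.one_add_le_sup_seminorm_apply (m := (2, n)) (𝕜 := ℝ) le_rfl hk f x)
  gcongr
  change 1 + x ^ 2 ≤ (1 + |x|) ^ 2
  rw [← sq_abs x]
  nlinarith [abs_nonneg x]

end IteratedDeriv

section Circulant

/-- The `p`-th eigenvalue `λ_p^{(L)}` of the convolution operator with kernel
`g ((L / π) sin (π (X - Y) / L))` on the circle of circumference `L`, written with the angular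
variable `t = (X - Y) / L`. -/
noncomputable def circulantEigenvalue (g : ℝ → ℝ) (L : ℝ) (p : ℤ) : ℂ :=
  L * ∫ t in (-(1/2) : ℝ)..(1/2 : ℝ), (g ((L / Real.pi) * Real.sin (Real.pi * t)) : ℂ) *
    Complex.exp (2 * Real.pi * Complex.I * (p : ℂ) * (t : ℂ))

/-- The function on the line, cut off to one period, whose Fourier integral at the frequency
`p / L` is `circulantEigenvalue g L p`. -/
noncomputable def chordProfile (g : ℝ → ℝ) (L : ℝ) : ℝ → ℂ :=
  (Set.Ioc (-(L / 2)) (L / 2)).indicator fun u => (g (chord L u) : ℂ)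

variable {g g' g'' : ℝ → ℝ} {C L u : ℝ}

lemma circulantEigenvalue_eq_integral_chord (g : ℝ → ℝ) (hL : L ≠ 0) (p : ℤ) :
    circulantEigenvalue g L p = ∫ u in -(L / 2)..L / 2, (g (chord L u) : ℂ) *
      Complex.exp (2 * Real.pi * Complex.I * (p / L : ℝ) * u) := by
  have hsubst := intervalIntegral.smul_integral_comp_mul_left (a := -(1/2)) (b := 1/2)
    (fun u : ℝ => (g (chord L u) : ℂ) *
      Complex.exp (2 * Real.pi * Complex.I * (p / L : ℝ) * u)) L
  rw [mul_neg, mul_one_div, Complex.real_smul] at hsubst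
  rw [← hsubst, circulantEigenvalue]
  congr 2 with t
  have hLC : (L : ℂ) ≠ 0 := Complex.ofReal_ne_zero.2 hL
  rw [chord, mul_div_cancel_left₀ t hL]
  congr 2
  push_cast
  field_simp

lemma fourierInv_chordProfile (g : ℝ → ℝ) (hL : 0 < L) (p : ℤ) :
    𝓕⁻ (chordProfile g L) (p / L) = circulantEigenvalue g L p := by
  rw [fourierInv_eq_integral_mul_cexp, circulantEigenvalue_eq_integral_chord g hL.ne',
    intervalIntegral.integral_of_le (by linarith), ← integral_indicator measurableSet_Ioc]
  simp only [chordProfile, Set.indicator_mul_left]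

lemma abs_comp_chord_le (hC : ∀ x, |g x| ≤ C * (1 + x ^ 2)⁻¹) (hL : 0 < L) (hu : |u| ≤ L / 2) :
    |g (chord L u)| ≤ 4 * C * (1 + u ^ 2)⁻¹ := by
  have hC0 : 0 ≤ C := by simpa using (abs_nonneg _).trans (hC 0)
  calc |g (chord L u)| ≤ C * (1 + chord L u ^ 2)⁻¹ := hC _
    _ ≤ C * (4 * (1 + u ^ 2)⁻¹) := by gcongr; exact inv_one_add_chord_sq_le hL hu
    _ = 4 * C * (1 + u ^ 2)⁻¹ := by ring

lemma norm_chordProfile_le (hC : ∀ x, |g x| ≤ C * (1 + x ^ 2)⁻¹) (hL : 0 < L) (u : ℝ) :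
    ‖chordProfile g L u‖ ≤ 4 * C * (1 + u ^ 2)⁻¹ := by
  by_cases hu : u ∈ Set.Ioc (-(L / 2)) (L / 2)
  · rw [chordProfile, Set.indicator_of_mem hu, Complex.norm_real, Real.norm_eq_abs]
    exact abs_comp_chord_le hC hL (abs_le.2 (Set.Ioc_subset_Icc_self hu))
  · have hC0 : 0 ≤ C := by simpa using (abs_nonneg _).trans (hC 0)
    rw [chordProfile, Set.indicator_of_notMem hu, norm_zero]
    positivity

lemma tendsto_chordProfile (hg : Continuous g) (u : ℝ) :
    Tendsto (fun L => chordProfile g L u) atTop (𝓝 (g u)) := by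
  refine ((Complex.continuous_ofReal.comp hg).continuousAt.tendsto.comp (tendsto_chord u)).congr' ?_
  filter_upwards [eventually_gt_atTop (2 * |u|)] with L hL
  have hu : u ∈ Set.Ioc (-(L / 2)) (L / 2) := by
    constructor <;> linarith [le_abs_self u, neg_abs_le u]
  simp only [chordProfile, Set.indicator_of_mem hu, Function.comp_apply]

lemma integrable_ofReal_of_abs_le (hg : Continuous g) (hC : ∀ x, |g x| ≤ C * (1 + x ^ 2)⁻¹) :
    Integrable fun x => (g x : ℂ) :=
  (integrable_inv_one_add_sq.const_mul C).mono' (by fun_prop)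
    (Eventually.of_forall fun x => by simpa using hC x)

theorem tendstoUniformly_fourierInv_chordProfile (hg : Continuous g)
    (hC : ∀ x, |g x| ≤ C * (1 + x ^ 2)⁻¹) :
    TendstoUniformly (fun L => 𝓕⁻ (chordProfile g L)) (𝓕⁻ fun x => (g x : ℂ)) atTop := by
  refine tendstoUniformly_fourierInv_of_dominated (bound := fun u => 4 * C * (1 + u ^ 2)⁻¹)
    (Eventually.of_forall fun L => ?_) (integrable_ofReal_of_abs_le hg hC)
    (integrable_inv_one_add_sq.const_mul _) ?_
    (Eventually.of_forall fun u => tendsto_chordProfile hg u)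
  · have hcont : Continuous fun u => (g (chord L u) : ℂ) :=
      Complex.continuous_ofReal.comp (hg.comp (continuous_chord L))
    exact hcont.aestronglyMeasurable.indicator measurableSet_Ioc
  · filter_upwards [eventually_gt_atTop (0 : ℝ)] with L hL
    exact Eventually.of_forall (norm_chordProfile_le hC hL)

lemma hasDerivAt_comp_chord (hg : ∀ x, HasDerivAt g (g' x) x) (hL : L ≠ 0) (u : ℝ) :
    HasDerivAt (fun u => g (chord L u)) (g' (chord L u) * Real.cos (Real.pi * (u / L))) u :=
  (hg (chord L u)).comp u (hasDerivAt_chord hL u)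

lemma hasDerivAt_comp_chord_mul_cos (hg' : ∀ x, HasDerivAt g' (g'' x) x) (hL : L ≠ 0) (u : ℝ) :
    HasDerivAt (fun u => g' (chord L u) * Real.cos (Real.pi * (u / L)))
      (g'' (chord L u) * Real.cos (Real.pi * (u / L)) ^ 2
        - (Real.pi / L) ^ 2 * chord L u * g' (chord L u)) u :=
  ((hasDerivAt_comp_chord hg' hL u).mul (hasDerivAt_cos_pi_mul_div L u)).congr_deriv (by ring)

lemma abs_deriv_comp_chord_mul_cos_le (hg' : ∀ x, |g' x| ≤ C * (1 + x ^ 2)⁻¹)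
    (hg'' : ∀ x, |g'' x| ≤ C * (1 + x ^ 2)⁻¹) (hL : 1 ≤ L) (hu : |u| ≤ L / 2) :
    |g'' (chord L u) * Real.cos (Real.pi * (u / L)) ^ 2
      - (Real.pi / L) ^ 2 * chord L u * g' (chord L u)| ≤ 20 * C * (1 + u ^ 2)⁻¹ := by
  have hL0 : 0 < L := by linarith
  have hcoef : (Real.pi / L) ^ 2 * |chord L u| ≤ 4 :=
    calc (Real.pi / L) ^ 2 * |chord L u| ≤ (Real.pi / L) ^ 2 * (L / Real.pi) := by
          gcongr; exact abs_chord_le hL0.le u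
      _ = Real.pi / L := by field_simp
      _ ≤ Real.pi := div_le_self Real.pi_pos.le hL
      _ ≤ 4 := Real.pi_le_four
  calc _ ≤ |g'' (chord L u) * Real.cos (Real.pi * (u / L)) ^ 2|
        + |(Real.pi / L) ^ 2 * chord L u * g' (chord L u)| := abs_sub _ _
    _ = |g'' (chord L u)| * Real.cos (Real.pi * (u / L)) ^ 2
        + (Real.pi / L) ^ 2 * |chord L u| * |g' (chord L u)| := by
        simp only [abs_mul, abs_sq]
    _ ≤ 4 * C * (1 + u ^ 2)⁻¹ * 1 + 4 * (4 * C * (1 + u ^ 2)⁻¹) := by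
        gcongr
        · exact (abs_nonneg _).trans (abs_comp_chord_le hg'' hL0 hu)
        · exact abs_comp_chord_le hg'' hL0 hu
        · exact Real.cos_sq_le_one _
        · exact abs_comp_chord_le hg' hL0 hu
    _ = 20 * C * (1 + u ^ 2)⁻¹ := by ring

lemma cexp_neg_half_period_eq (hL : L ≠ 0) (p : ℤ) :
    Complex.exp (2 * Real.pi * Complex.I * (p / L : ℝ) * (-(L / 2) : ℝ)) =
      Complex.exp (2 * Real.pi * Complex.I * (p / L : ℝ) * (L / 2 : ℝ)) := by
  have hLC : (L : ℂ) ≠ 0 := Complex.ofReal_ne_zero.2 hL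
  refine Complex.exp_eq_exp_iff_exists_int.2 ⟨-p, ?_⟩
  push_cast
  field_simp
  ring

theorem norm_circulantEigenvalue_le (hg : ContDiff ℝ 2 g) (hg_even : ∀ x, g (-x) = g x)
    (hdecay : ∀ k ≤ 2, ∀ x, |iteratedDeriv k g x| ≤ C * (1 + x ^ 2)⁻¹) (hL : 1 ≤ L) (p : ℤ) :
    ‖circulantEigenvalue g L p‖ ≤ 24 * C * Real.pi * (1 + (p / L) ^ 2)⁻¹ := by
  have hL0 : 0 < L := by linarith
  have hd0 (x : ℝ) : HasDerivAt g (iteratedDeriv 1 g x) x := by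
    simpa using hasDerivAt_iteratedDeriv (k := 0) hg (by norm_num) x
  have hd1 := hasDerivAt_iteratedDeriv (k := 1) hg (by norm_num)
  have habs {u : ℝ} (hu : u ∈ Set.Icc (-(L / 2)) (L / 2)) : |u| ≤ L / 2 := abs_le.2 hu
  have hcont : Continuous fun u => iteratedDeriv 2 g (chord L u) * Real.cos (Real.pi * (u / L)) ^ 2
      - (Real.pi / L) ^ 2 * chord L u * iteratedDeriv 1 g (chord L u) := by
    have := hg.continuous_iteratedDeriv 1 (by norm_num)
    have := hg.continuous_iteratedDeriv 2 le_rfl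
    have := continuous_chord L
    fun_prop
  rw [circulantEigenvalue_eq_integral_chord g hL0.ne']
  refine (norm_integral_mul_cexp_le_inv_one_add_sq (A := 4 * C) (B := 20 * C) (by linarith)
    (fun u => (hasDerivAt_comp_chord hd0 hL0.ne' u).ofReal_comp)
    (fun u => (hasDerivAt_comp_chord_mul_cos hd1 hL0.ne' u).ofReal_comp)
    ((Complex.continuous_ofReal.comp hcont).intervalIntegrable _ _) ?_ ?_
    (cexp_neg_half_period_eq hL0.ne' p) (fun u hu => ?_) (fun u hu => ?_)).trans_eq (by ring)
  -- The boundary terms cancel: `g` is even, and `cos (π u / L)` vanishes at `u = ± L / 2`.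
  · simp only [chord_neg, hg_even]
  · have hcos : Real.cos (Real.pi * (L / 2 / L)) = 0 := by
      rw [div_div_cancel_left' hL0.ne', ← div_eq_mul_inv, Real.cos_pi_div_two]
    simp only [neg_div, mul_neg, Real.cos_neg, hcos, mul_zero]
  · rw [Complex.norm_real, Real.norm_eq_abs]
    exact abs_comp_chord_le (by simpa using hdecay 0 (by norm_num)) hL0 (habs hu)
  · rw [Complex.norm_real, Real.norm_eq_abs]
    exact abs_deriv_comp_chord_mul_cos_le (hdecay 1 (by norm_num)) (hdecay 2 le_rfl) hL (habs hu)

end Circulant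

theorem continuum_thermodynamic_limit_pressure_general {g : ℝ → ℝ} {C : ℝ} (hg : ContDiff ℝ 2 g)
    (hg_even : ∀ u, g (-u) = g u)
    (hdecay : ∀ k ≤ 2, ∀ x, |iteratedDeriv k g x| ≤ C * (1 + x ^ 2)⁻¹)
    {laminf : ℝ → ℝ} (hlaminf : ∀ s, (laminf s : ℂ) = 𝓕⁻ (fun t => (g t : ℂ)) s)
    {z : ℝ} (hz : ∀ s, 0 < 1 + z * laminf s)
    {lamL : ℝ → ℤ → ℝ} (hlamL : ∀ L p, (lamL L p : ℂ) = circulantEigenvalue g L p) :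
    Tendsto (fun L : ℝ => (1 / L) * ∑' p : ℤ, Real.log (1 + z * lamL L p)) atTop
      (𝓝 (∫ s, Real.log (1 + z * laminf s))) := by
  have hC (x : ℝ) : |g x| ≤ C * (1 + x ^ 2)⁻¹ := by simpa using hdecay 0 (by norm_num) x
  obtain rfl : laminf = fun s => (𝓕⁻ (fun t => (g t : ℂ)) s).re :=
    funext fun s => by rw [← hlaminf, Complex.ofReal_re]
  have hzre : UniformContinuous fun w : ℂ => z * w.re := (z • Complex.reCLM).uniformContinuous
  refine (tendsto_riemannSum_log_one_add (Λ := fun L s => z * (𝓕⁻ (chordProfile g L) s).re)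
    (C := |z| * (24 * C * Real.pi)) ?_ ?_ hz ?_ ?_).congr' ?_
  · exact hzre.continuous.comp
      (continuous_fourierInv_of_integrable (integrable_ofReal_of_abs_le hg.continuous hC))
  · exact (hzre.continuous.tendsto' 0 0 (by simp)).comp (tendsto_fourierInv_cocompact _)
  · exact hzre.comp_tendstoUniformly (tendstoUniformly_fourierInv_chordProfile hg.continuous hC)
  · filter_upwards [eventually_ge_atTop (1 : ℝ)] with L hL p
    rw [fourierInv_chordProfile g (one_pos.trans_le hL), abs_mul, mul_assoc]
    gcongr
    exact (Complex.abs_re_le_norm _).trans (norm_circulantEigenvalue_le hg hg_even hdecay hL p)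
  · filter_upwards [eventually_gt_atTop (0 : ℝ)] with L hL
    simp only [fourierInv_chordProfile g hL, ← hlamL, Complex.ofReal_re]

/-- thermodynamic limit of the pressure on the continuum: for `g` an even real
Schwartz function with nonnegative Fourier transform `λ^∞(s) = ∫ g(t) e^{2πist} dt`, fugacity
`z > 0`, and eigenvalues `λ_p^{(L)} = L ∫_{-1/2}^{1/2} g((L/π) sin(πt)) e^{2πipt} dt` satisfying
`1 + zλ_p^{(L)} > 0`, one has
`lim_{L→∞} (1/L) Σ_{p∈ℤ} log(1 + zλ_p^{(L)}) = ∫_{-∞}^∞ log(1 + zλ^∞(s)) ds`. -/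
theorem continuum_thermodynamic_limit_pressure (g : SchwartzMap ℝ ℝ)
    (hg_even : ∀ u : ℝ, g (-u) = g u)
    (laminf : ℝ → ℝ)
    (hlaminf : ∀ s : ℝ, (laminf s : ℂ) =
      ∫ t : ℝ, (g t : ℂ) * Complex.exp (2 * Real.pi * Complex.I * (s : ℂ) * (t : ℂ)))
    (hlaminf_pos : ∀ s : ℝ, 0 ≤ laminf s)
    (z : ℝ) (hz : 0 < z)
    (lamL : ℝ → ℤ → ℝ)
    (hlamL : ∀ (L : ℝ) (p : ℤ), (lamL L p : ℂ) =
      (L : ℂ) * ∫ t in (-(1/2) : ℝ)..(1/2 : ℝ),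
        (g ((L / Real.pi) * Real.sin (Real.pi * t)) : ℂ) *
          Complex.exp (2 * Real.pi * Complex.I * (p : ℂ) * (t : ℂ)))
    (hpos : ∀ L : ℝ, 0 < L → ∀ p : ℤ, 0 < 1 + z * lamL L p) :
    Tendsto (fun L : ℝ => (1 / L) * ∑' p : ℤ, Real.log (1 + z * lamL L p))
      atTop
      (𝓝 (∫ s : ℝ, Real.log (1 + z * laminf s))) := by
  obtain ⟨C, hC⟩ := exists_norm_iteratedDeriv_le_inv_one_add_sq g 2
  exact continuum_thermodynamic_limit_pressure_general (g.smooth 2) hg_even hC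
    (fun s => (hlaminf s).trans (fourierInv_eq_integral_mul_cexp _ s).symm)
    (fun s => by have := hlaminf_pos s; positivity) hlamL
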